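/- Let H be a Hopf monoid in a braided monoidal category C (not assumed symmetric), and let (δ, σ) be a braided modular pair in involution for H. Then τ₂ ∘ σ₁ = σ₀ ∘ τ₃ as morphisms H ⊗ H ⊗ H → H ⊗ H, where σ₀ := (ε ⊗ 1_{H⊗H}) and σ₁ := (1_H ⊗ ε ⊗ 1_H) (composed with the evident unitors). -/

import Mathlib

open CategoryTheory hiding HopfObj
open MonoidalCategory

universe v u

/-- A Hopf algebra object (a "braided Hopf algebra") in a braided monoidal category `C`,
consisting of an object `X` with multiplication `mul`, unit `one`, comultiplication
`comul`, counit `counit` and antipode `antipode`, satisfying the usual axioms, with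
the compatibility of `mul` and `comul` expressed via the braiding. -/
structure HopfObj (C : Type u) [Category.{v} C] [MonoidalCategory C]
    [BraidedCategory C] where
  X : C
  mul : X ⊗ X ⟶ X
  one : 𝟙_ C ⟶ X
  comul : X ⟶ X ⊗ X
  counit : X ⟶ 𝟙_ C
  antipode : X ⟶ X
  mul_assoc : (mul ▷ X) ≫ mul = (α_ X X X).hom ≫ (X ◁ mul) ≫ mul
  one_mul : (one ▷ X) ≫ mul = (λ_ X).hom
  mul_one : (X ◁ one) ≫ mul = (ρ_ X).hom
  comul_assoc : comul ≫ (comul ▷ X) ≫ (α_ X X X).hom = comul ≫ (X ◁ comul)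
  counit_comul : comul ≫ (counit ▷ X) = (λ_ X).inv
  comul_counit : comul ≫ (X ◁ counit) = (ρ_ X).inv
  mul_comul : mul ≫ comul =
      (comul ⊗ₘ comul) ≫ (α_ X X (X ⊗ X)).hom ≫ (X ◁ (α_ X X X).inv) ≫
        (X ◁ ((β_ X X).hom ▷ X)) ≫ (X ◁ (α_ X X X).hom) ≫
        (α_ X X (X ⊗ X)).inv ≫ (mul ⊗ₘ mul)
  one_comul : one ≫ comul = (λ_ (𝟙_ C)).inv ≫ (one ⊗ₘ one)
  mul_counit : mul ≫ counit = (counit ⊗ₘ counit) ≫ (λ_ (𝟙_ C)).hom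
  one_counit : one ≫ counit = 𝟙 (𝟙_ C)
  antipode_left : comul ≫ (antipode ▷ X) ≫ mul = counit ≫ one
  antipode_right : comul ≫ (X ◁ antipode) ≫ mul = counit ≫ one

variable {C : Type u} [Category.{v} C] [MonoidalCategory C] [BraidedCategory C]

/-- The `δ`-twisted antipode `S̃ = λ_H ∘ (δ ⊗ S) ∘ Δ`. -/
def HopfObj.twist (A : HopfObj C) (δ : A.X ⟶ 𝟙_ C) : A.X ⟶ A.X :=
  A.comul ≫ (δ ⊗ₘ A.antipode) ≫ (λ_ A.X).hom

/-- `δ : H ⟶ 𝟙` is a character, i.e. a morphism of monoid objects. -/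
def HopfObj.IsCharacter (A : HopfObj C) (δ : A.X ⟶ 𝟙_ C) : Prop :=
  A.mul ≫ δ = (δ ⊗ₘ δ) ≫ (λ_ (𝟙_ C)).hom ∧ A.one ≫ δ = 𝟙 (𝟙_ C)

/-- `σ : 𝟙 ⟶ H` is a cocharacter, i.e. a morphism of comonoid objects. -/
def HopfObj.IsCocharacter (A : HopfObj C) (σ : 𝟙_ C ⟶ A.X) : Prop :=
  σ ≫ A.comul = (λ_ (𝟙_ C)).inv ≫ (σ ⊗ₘ σ) ∧ σ ≫ A.counit = 𝟙 (𝟙_ C)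

/-- The morphism `m ∘ (m ⊗ 1_H) ∘ ((S ∘ σ) ⊗ (S̃ ∘ S̃) ⊗ σ) : H ⟶ H`
(with unitors inserted). -/
def HopfObj.bmpiMap (A : HopfObj C) (δ : A.X ⟶ 𝟙_ C) (σ : 𝟙_ C ⟶ A.X) :
    A.X ⟶ A.X :=
  (λ_ A.X).inv ≫ ((σ ≫ A.antipode) ⊗ₘ (A.twist δ ≫ A.twist δ)) ≫
    (ρ_ (A.X ⊗ A.X)).inv ≫ ((A.X ⊗ A.X) ◁ σ) ≫ (A.mul ▷ A.X) ≫ A.mul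

/-- `(δ, σ)` is a braided modular pair in involution. -/
def HopfObj.IsBMPI (A : HopfObj C) (δ : A.X ⟶ 𝟙_ C) (σ : 𝟙_ C ⟶ A.X) : Prop :=
  σ ≫ δ = 𝟙 (𝟙_ C) ∧ A.bmpiMap δ σ = 𝟙 A.X

/-- The cyclic operator `τ₂ = (m ⊗ m) ∘ (1_H ⊗ ψ ⊗ 1_H) ∘ ((Δ ∘ S̃) ⊗ 1_H ⊗ σ)`,
with the `σ`-factor inserted via `H ⊗ H ≅ (H ⊗ H) ⊗ 𝟙`. -/
def HopfObj.tau2 (A : HopfObj C) (δ : A.X ⟶ 𝟙_ C) (σ : 𝟙_ C ⟶ A.X) :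
    A.X ⊗ A.X ⟶ A.X ⊗ A.X :=
  (ρ_ (A.X ⊗ A.X)).inv ≫ (((A.twist δ ≫ A.comul) ⊗ₘ 𝟙 A.X) ⊗ₘ σ) ≫
    (((α_ A.X A.X A.X).hom ≫ (A.X ◁ (β_ A.X A.X).hom) ≫ (α_ A.X A.X A.X).inv) ▷ A.X) ≫
    (α_ (A.X ⊗ A.X) A.X A.X).hom ≫ (A.mul ⊗ₘ A.mul)

/-- `Δ² = (1_H ⊗ Δ) ∘ Δ`. -/
def HopfObj.comul2 (A : HopfObj C) : A.X ⟶ A.X ⊗ (A.X ⊗ A.X) :=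
  A.comul ≫ (A.X ◁ A.comul)

/-- `m₃`, the multiplication of the threefold braided tensor product algebra:
`(m ⊗ m ⊗ m) ∘ (1_H ⊗ ψ ⊗ 1_{H⊗H⊗H}) ∘ (1_{H⊗H⊗H} ⊗ ψ ⊗ 1_H) ∘ (1_{H⊗H} ⊗ ψ ⊗ 1_{H⊗H})`
(with associators inserted). -/
def HopfObj.mul3 (A : HopfObj C) :
    (A.X ⊗ (A.X ⊗ A.X)) ⊗ (A.X ⊗ (A.X ⊗ A.X)) ⟶ A.X ⊗ (A.X ⊗ A.X) :=
  (α_ A.X (A.X ⊗ A.X) (A.X ⊗ (A.X ⊗ A.X))).hom ≫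
  (A.X ◁ (α_ A.X A.X (A.X ⊗ (A.X ⊗ A.X))).hom) ≫
  (A.X ◁ (A.X ◁ ((α_ A.X A.X (A.X ⊗ A.X)).inv ≫
    ((β_ A.X A.X).hom ▷ (A.X ⊗ A.X)) ≫ (α_ A.X A.X (A.X ⊗ A.X)).hom))) ≫
  (A.X ◁ (A.X ◁ (A.X ◁ ((α_ A.X A.X A.X).inv ≫
    ((β_ A.X A.X).hom ▷ A.X) ≫ (α_ A.X A.X A.X).hom)))) ≫
  (A.X ◁ ((α_ A.X A.X (A.X ⊗ (A.X ⊗ A.X))).inv ≫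
    ((β_ A.X A.X).hom ▷ (A.X ⊗ (A.X ⊗ A.X))) ≫
    (α_ A.X A.X (A.X ⊗ (A.X ⊗ A.X))).hom)) ≫
  (A.X ◁ (A.X ◁ (α_ A.X A.X (A.X ⊗ A.X)).inv)) ≫
  (α_ A.X A.X ((A.X ⊗ A.X) ⊗ (A.X ⊗ A.X))).inv ≫
  (A.mul ⊗ₘ (A.mul ⊗ₘ A.mul))

/-- The cyclic operator `τ₃ = m₃ ∘ ((Δ² ∘ S̃) ⊗ 1_{H⊗H} ⊗ σ)`, with the `σ`-factor
inserted via `H^{⊗3} ≅ H^{⊗3} ⊗ 𝟙`. -/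
def HopfObj.tau3 (A : HopfObj C) (δ : A.X ⟶ 𝟙_ C) (σ : 𝟙_ C ⟶ A.X) :
    A.X ⊗ (A.X ⊗ A.X) ⟶ A.X ⊗ (A.X ⊗ A.X) :=
  ((A.twist δ ≫ A.comul2) ⊗ₘ (A.X ◁ ((ρ_ A.X).inv ≫ (A.X ◁ σ)))) ≫ A.mul3

/-- Codegeneracy `σ₀ = ε ⊗ 1_{H⊗H}` (composed with the evident unitor). -/
def HopfObj.deg0 (A : HopfObj C) : A.X ⊗ (A.X ⊗ A.X) ⟶ A.X ⊗ A.X :=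
  (A.counit ▷ (A.X ⊗ A.X)) ≫ (λ_ (A.X ⊗ A.X)).hom

/-- Codegeneracy `σ₁ = 1_H ⊗ ε ⊗ 1_H` (composed with the evident unitor). -/
def HopfObj.deg1 (A : HopfObj C) : A.X ⊗ (A.X ⊗ A.X) ⟶ A.X ⊗ A.X :=
  A.X ◁ ((A.counit ▷ A.X) ≫ (λ_ A.X).hom)

/-- Codegeneracy `σ₂ = 1_{H⊗H} ⊗ ε` (composed with the evident unitor). -/
def HopfObj.deg2 (A : HopfObj C) : A.X ⊗ (A.X ⊗ A.X) ⟶ A.X ⊗ A.X :=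
  A.X ◁ ((A.X ◁ A.counit) ≫ (ρ_ A.X).hom)

/-!
For the braided tensor algebra structures on `H ⊗ H` and `H ⊗ H ⊗ H`, the cyclic operators are
`τ₂ = μ ∘ (Δ S̃ ⊗ 1 ⊗ σ)` and `τ₃ = μ ∘ (Δ² S̃ ⊗ 1 ⊗ 1 ⊗ σ)`. Since `ε` is a morphism of monoids,
so is `σ₀ = ε ⊗ 1 ⊗ 1 : H ⊗ H ⊗ H ⟶ H ⊗ H`, so `σ₀` can be moved through `μ` onto the two factors.
On the first factor counitality turns `Δ²` into `Δ`; on the second it applies `ε` to the middle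
tensor factor of `H ⊗ (H ⊗ H)`, which is `σ₁`.
-/

open scoped MonObj

theorem tensorμ_tensor_comp_whiskerLeft_tensorμ (X₁ X₂ X₃ Y₁ Y₂ Y₃ : C) :
    tensorμ X₁ (X₂ ⊗ X₃) Y₁ (Y₂ ⊗ Y₃) ≫ (X₁ ⊗ Y₁) ◁ tensorμ X₂ X₃ Y₂ Y₃ =
      (α_ X₁ (X₂ ⊗ X₃) (Y₁ ⊗ Y₂ ⊗ Y₃)).hom ≫
      X₁ ◁ (α_ X₂ X₃ (Y₁ ⊗ Y₂ ⊗ Y₃)).hom ≫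
      X₁ ◁ X₂ ◁ ((α_ X₃ Y₁ (Y₂ ⊗ Y₃)).inv ≫
        (β_ X₃ Y₁).hom ▷ (Y₂ ⊗ Y₃) ≫ (α_ Y₁ X₃ (Y₂ ⊗ Y₃)).hom) ≫
      X₁ ◁ X₂ ◁ Y₁ ◁ ((α_ X₃ Y₂ Y₃).inv ≫ (β_ X₃ Y₂).hom ▷ Y₃ ≫ (α_ Y₂ X₃ Y₃).hom) ≫
      X₁ ◁ ((α_ X₂ Y₁ (Y₂ ⊗ X₃ ⊗ Y₃)).inv ≫
        (β_ X₂ Y₁).hom ▷ (Y₂ ⊗ X₃ ⊗ Y₃) ≫ (α_ Y₁ X₂ (Y₂ ⊗ X₃ ⊗ Y₃)).hom) ≫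
      X₁ ◁ Y₁ ◁ (α_ X₂ Y₂ (X₃ ⊗ Y₃)).inv ≫
      (α_ X₁ Y₁ ((X₂ ⊗ Y₂) ⊗ X₃ ⊗ Y₃)).inv := by
  -- The braidings of `X₃, Y₂` and of `X₂, Y₁` act on disjoint factors: exchanging them brings the
  -- two braidings with `Y₁` together, and these compose to the braiding of `X₂ ⊗ X₃` with `Y₁`.
  rw [whiskerLeft_comp X₁ (α_ X₂ Y₁ (Y₂ ⊗ X₃ ⊗ Y₃)).inv, whiskerLeft_comp X₁ (_ ▷ _)]
  simp only [← whiskerLeft_comp_assoc X₁, Category.assoc, associator_inv_naturality_right_assoc,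
    whisker_exchange_assoc]
  simp only [tensorμ, BraidedCategory.braiding_tensor_left_hom]
  monoidal

section

variable {D : Type*} [Category* D] [MonoidalCategory D]

theorem whiskerLeft_comp_whiskerRight_leftUnitor {M Y Z : D} (e : M ⟶ 𝟙_ D) (f : Y ⟶ Z) :
    M ◁ f ≫ e ▷ Z ≫ (λ_ Z).hom = (e ▷ Y ≫ (λ_ Y).hom) ≫ f := by
  rw [whisker_exchange_assoc, leftUnitor_naturality, Category.assoc]

theorem rightUnitor_inv_tensorHom_associator {P Q U V : D} (f : P ⟶ Q) (g : 𝟙_ D ⟶ V) :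
    (ρ_ (P ⊗ U)).inv ≫ ((f ⊗ₘ 𝟙 U) ⊗ₘ g) ≫ (α_ Q U V).hom =
      f ⊗ₘ ((ρ_ U).inv ≫ U ◁ g) := by
  rw [MonoidalCategory.tensorHom_def f ((ρ_ U).inv ≫ U ◁ g), MonoidalCategory.tensorHom_def _ g,
    tensorHom_id]
  monoidal

end

namespace HopfObj

variable (A : HopfObj C)

/-- The monoid underlying `A`. Through it `A.X ⊗ A.X` and `A.X ⊗ A.X ⊗ A.X` carry the braided
tensor product multiplications, written `μ`. -/
instance instMonObj : MonObj A.X where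
  one := A.one
  mul := A.mul
  one_mul := A.one_mul
  mul_one := A.mul_one
  mul_assoc := A.mul_assoc

instance isMonHom_counit : IsMonHom A.counit where
  one_hom := A.one_counit
  mul_hom := A.mul_counit

instance isMonHom_deg0 : IsMonHom A.deg0 :=
  inferInstanceAs (IsMonHom (A.counit ▷ (A.X ⊗ A.X) ≫ (λ_ (A.X ⊗ A.X)).hom))

theorem mul3_eq_mul : A.mul3 = μ[A.X ⊗ A.X ⊗ A.X] := by
  rw [MonObj.tensorObj.mul_def, MonObj.tensorObj.mul_def, ← whiskerLeft_comp_tensorHom,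
    reassoc_of% tensorμ_tensor_comp_whiskerLeft_tensorμ]
  rfl

theorem tau3_eq_comp_mul (δ : A.X ⟶ 𝟙_ C) (σ : 𝟙_ C ⟶ A.X) :
    A.tau3 δ σ =
      ((A.twist δ ≫ A.comul2) ⊗ₘ A.X ◁ ((ρ_ A.X).inv ≫ A.X ◁ σ)) ≫ μ[A.X ⊗ A.X ⊗ A.X] := by
  rw [tau3, mul3_eq_mul]

theorem tau2_eq_comp_mul (δ : A.X ⟶ 𝟙_ C) (σ : 𝟙_ C ⟶ A.X) :
    A.tau2 δ σ =
      ((A.twist δ ≫ A.comul) ⊗ₘ ((ρ_ A.X).inv ≫ A.X ◁ σ)) ≫ μ[A.X ⊗ A.X] := by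
  rw [← rightUnitor_inv_tensorHom_associator, MonObj.tensorObj.mul_def]
  simp only [tau2, tensorμ, Category.assoc]
  monoidal

theorem comul2_deg0 : A.comul2 ≫ A.deg0 = A.comul := by
  rw [comul2, deg0, Category.assoc, whiskerLeft_comp_whiskerRight_leftUnitor, Category.assoc,
    reassoc_of% A.counit_comul, Iso.inv_hom_id_assoc]

theorem whiskerLeft_deg0 {Y : C} (f : Y ⟶ A.X ⊗ A.X) :
    A.X ◁ f ≫ A.deg0 = (A.counit ▷ Y ≫ (λ_ Y).hom) ≫ f :=
  whiskerLeft_comp_whiskerRight_leftUnitor A.counit f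

theorem tau2_deg1_general (δ : A.X ⟶ 𝟙_ C) (σ : 𝟙_ C ⟶ A.X) :
    A.deg1 ≫ A.tau2 δ σ = A.tau3 δ σ ≫ A.deg0 := by
  set s := (ρ_ A.X).inv ≫ A.X ◁ σ
  symm
  calc A.tau3 δ σ ≫ A.deg0
      = ((A.twist δ ≫ A.comul2) ⊗ₘ A.X ◁ s) ≫ (A.deg0 ⊗ₘ A.deg0) ≫ μ := by
        rw [tau3_eq_comp_mul, Category.assoc, IsMonHom.mul_hom]
    _ = ((A.twist δ ≫ A.comul) ⊗ₘ ((A.counit ▷ A.X ≫ (λ_ A.X).hom) ≫ s)) ≫ μ := by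
        rw [tensorHom_comp_tensorHom_assoc, Category.assoc, comul2_deg0, whiskerLeft_deg0]
    _ = A.deg1 ≫ ((A.twist δ ≫ A.comul) ⊗ₘ s) ≫ μ := by
        rw [deg1, ← id_tensorHom, tensorHom_comp_tensorHom_assoc, Category.id_comp]
    _ = A.deg1 ≫ A.tau2 δ σ := by rw [tau2_eq_comp_mul]

end HopfObj

/-- `τ₂ ∘ σ₁ = σ₀ ∘ τ₃` as morphisms `H ⊗ H ⊗ H ⟶ H ⊗ H`. -/
theorem HopfObj.tau2_deg1 (A : HopfObj C) (δ : A.X ⟶ 𝟙_ C) (σ : 𝟙_ C ⟶ A.X)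
    (hδ : A.IsCharacter δ) (hσ : A.IsCocharacter σ) (hbmpi : A.IsBMPI δ σ) :
    A.deg1 ≫ A.tau2 δ σ = A.tau3 δ σ ≫ A.deg0 :=
  A.tau2_deg1_general δ σ
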